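/- Let α, β, γ, a, b, c be real numbers such that R_1(α) R_2(β) R_1(γ) = R_2(a) R_1(b) R_2(c) as 3 × 3 real matrices. Then sin α · sin β = sin b · sin c and sin β · sin γ = sin a · sin b. -/

import Mathlib

open Matrix
open scoped Real

noncomputable section

/-- The Givens rotation `R_1(θ)` in `SO(3)` (2×2 block in rows/columns 1, 2). -/
def R1 (t : ℝ) : Matrix (Fin 3) (Fin 3) ℝ :=
  !![Real.cos t, Real.sin t, 0; -Real.sin t, Real.cos t, 0; 0, 0, 1]

/-- The Givens rotation `R_2(θ)` in `SO(3)` (2×2 block in rows/columns 2, 3). -/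
def R2 (t : ℝ) : Matrix (Fin 3) (Fin 3) ℝ :=
  !![1, 0, 0; 0, Real.cos t, Real.sin t; 0, -Real.sin t, Real.cos t]

/-- If `R_1(α) R_2(β) R_1(γ) = R_2(a) R_1(b) R_2(c)` then
`sin α sin β = sin b sin c` and `sin β sin γ = sin a sin b`. -/
theorem givens_turnover_sin_relations (α β γ a b c : ℝ)
    (h : R1 α * R2 β * R1 γ = R2 a * R1 b * R2 c) :
    Real.sin α * Real.sin β = Real.sin b * Real.sin c ∧
    Real.sin β * Real.sin γ = Real.sin a * Real.sin b := by
  have h1 := congrFun (congrFun h 0) 2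
  have h2 := congrFun (congrFun h 2) 0
  simp [R1, R2, Matrix.mul_apply, Fin.sum_univ_three] at h1 h2
  exact ⟨by linarith, by linarith⟩
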